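/- (Gaussian limit of the log-target increment.) For each dimension d, let π^(d) be an everywhere-positive probability density on ℝ^d with L^(d) = log π^(d) twice continuously differentiable, let X^(d) ∼ π^(d) and Z^(d) ∼ N(0, I_d) be independent, and suppose there exist s^(d) > 0 such that as d → ∞: ‖∇L^(d)(X^(d))‖/s^(d) → 1 in probability; ΔL^(d)(X^(d))/(s^(d))² → −1 in probability; Trace[(H^(d)(X^(d)))²]/(s^(d))⁴ → 0 in probability; and for all σ, ε > 0, P(sup_{t∈(0,1)} |⟨Z^(d), [H^(d)(X^(d)+tσZ^(d)/s^(d)) − H^(d)(X^(d))]Z^(d)⟩|/(s^(d))² > ε) → 0, where H^(d) is the Hessian of L^(d). Fix ℓ > 0 and set λ^(d) = ℓ/s^(d). Then L^(d)(X^(d) + λ^(d) Z^(d)) − L^(d)(X^(d)) converges in distribution, as d → ∞, to a Gaussian random variable with mean −ℓ²/2 and variance ℓ². -/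

import Mathlib

open MeasureTheory ProbabilityTheory Real Filter Topology

/-- The standard Gaussian measure `N(0, I_d)` on `ℝ^d`. -/
noncomputable def stdGaussian (d : ℕ) : Measure (Fin d → ℝ) :=
  Measure.pi fun _ : Fin d => gaussianReal 0 1

/-- The Hessian matrix `H(x) = [∂²_{ij} L(x)]` of a function `L` on `ℝ^d`. -/
noncomputable def hessian {d : ℕ} (L : (Fin d → ℝ) → ℝ) (x : Fin d → ℝ) :
    Matrix (Fin d) (Fin d) ℝ := fun i j =>
  fderiv ℝ (fun y => fderiv ℝ L y (Pi.single j 1)) x (Pi.single i 1)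

/-- The squared Euclidean norm of the gradient of `L` at `x`, `‖∇L(x)‖²`. -/
noncomputable def gradNormSq {d : ℕ} (L : (Fin d → ℝ) → ℝ) (x : Fin d → ℝ) : ℝ :=
  ∑ i, (fderiv ℝ L x (Pi.single i 1)) ^ 2

/-! Expand `L` to second order along `z`, with step `ℓ / s`. Given `x`, the linear term is a centred
Gaussian with variance `ℓ² ‖∇L(x)‖² / s²`, so its law is a Gaussian mixture whose variance
concentrates at `ℓ²`. The quadratic form `⟨z, H(x) z⟩ / s²` has conditional mean `tr H(x) / s²`,
which tends to `-1`, and conditional variance `2 tr (H(x)²) / s⁴`, which tends to `0`; hence by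
Chebyshev the quadratic term concentrates at `-ℓ² / 2`. The regularity of `H` controls the Taylor
remainder, and Slutsky's theorem combines the two terms. -/

section TendstoInProbability

variable {ι : Type*} {Ω Ω' : ι → Type*} [∀ i, MeasurableSpace (Ω i)]
  [∀ i, MeasurableSpace (Ω' i)] {P : ∀ i, Measure (Ω i)} {Q : ∀ i, Measure (Ω' i)}
  {l : Filter ι}

/-- Convergence in probability of `f i`, a random variable on the probability space `(Ω i, P i)`,
to a constant `c`. Unlike in `TendstoInMeasure`, the probability space may vary with `i`. -/
def TendstoInProbability {E : Type*} [PseudoMetricSpace E] (P : ∀ i, Measure (Ω i))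
    (f : ∀ i, Ω i → E) (l : Filter ι) (c : E) : Prop :=
  ∀ ε > 0, Tendsto (fun i => P i {x | ε < dist (f i x) c}) l (𝓝 0)

namespace TendstoInProbability

section Metric

variable {E F : Type*} [PseudoMetricSpace E] [PseudoMetricSpace F] {f : ∀ i, Ω i → E}
  {g : ∀ i, Ω i → F} {c : E} {c' : F}

lemma of_dist_le (hg : TendstoInProbability P g l c')
    (hfg : ∀ i x, dist (f i x) c ≤ dist (g i x) c') : TendstoInProbability P f l c := fun ε hε =>
  tendsto_of_tendsto_of_tendsto_of_le_of_le tendsto_const_nhds (hg ε hε) (fun _ => zero_le)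
    fun i => measure_mono fun x hx => lt_of_lt_of_le hx (hfg i x)

lemma comp_continuousAt {φ : E → F} (hf : TendstoInProbability P f l c)
    (hφ : ContinuousAt φ c) : TendstoInProbability P (fun i x => φ (f i x)) l (φ c) := by
  intro ε hε
  obtain ⟨δ, hδ, h⟩ := Metric.continuousAt_iff.1 hφ ε hε
  refine tendsto_of_tendsto_of_tendsto_of_le_of_le tendsto_const_nhds (hf (δ / 2) (half_pos hδ))
    (fun _ => zero_le) fun i => measure_mono fun x (hx : ε < _) => ?_
  by_contra hfx
  exact hx.not_gt (h ((not_lt.1 hfx).trans_lt (half_lt_self hδ)))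

lemma prodMk (hf : TendstoInProbability P f l c) (hg : TendstoInProbability P g l c') :
    TendstoInProbability P (fun i x => (f i x, g i x)) l (c, c') := by
  intro ε hε
  refine tendsto_of_tendsto_of_tendsto_of_le_of_le tendsto_const_nhds
    (by simpa only [add_zero] using (hf ε hε).add (hg ε hε)) (fun _ => zero_le) fun i => ?_
  refine (measure_mono fun x (hx : ε < _) => ?_).trans (measure_union_le _ _)
  exact lt_max_iff.1 hx

lemma comp_fst [∀ i, IsProbabilityMeasure (Q i)] (hf : TendstoInProbability P f l c) :
    TendstoInProbability (fun i => (P i).prod (Q i)) (fun i p => f i p.1) l c := by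
  intro ε hε
  refine (hf ε hε).congr fun i => ?_
  rw [← mul_one (P i _), ← measure_univ (μ := Q i), ← Measure.prod_prod]
  congr 1
  ext p
  simp

end Metric

lemma tendsto_integral {E : Type*} [NormedAddCommGroup E] [NormedSpace ℝ E] [CompleteSpace E]
    [∀ i, IsProbabilityMeasure (P i)] {f : ∀ i, Ω i → E} {c : E}
    (h : TendstoInProbability P f l c) (hf : ∀ i, AEStronglyMeasurable (f i) (P i)) {C : ℝ}
    (hC : ∀ i x, ‖f i x‖ ≤ C) : Tendsto (fun i => ∫ x, f i x ∂P i) l (𝓝 c) := by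
  have integrable_f (i) : Integrable (f i) (P i) := .of_bound (hf i) C (ae_of_all _ (hC i))
  have dist_integral_le (ε : ℝ) (hε : 0 ≤ ε) (i) : dist (∫ x, f i x ∂P i) c ≤
      ε + (C + ‖c‖) * (P i).real {x | ε < dist (f i x) c} := by
    set S := {x | ε < dist (f i x) c}
    have nullMeasurable : NullMeasurableSet S (P i) :=
      nullMeasurableSet_lt aemeasurable_const ((hf i).dist aestronglyMeasurable_const).aemeasurable
    calc dist (∫ x, f i x ∂P i) c = ‖∫ x, (f i x - c) ∂P i‖ := by
          rw [integral_sub (integrable_f i) (integrable_const c), integral_const, dist_eq_norm,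
            probReal_univ, one_smul]
      _ ≤ ∫ x, (ε + S.indicator (fun _ => C + ‖c‖) x) ∂P i := by
          refine norm_integral_le_of_norm_le ((integrable_const ε).add
            ((integrable_const _).indicator₀ nullMeasurable)) (ae_of_all _ fun x => ?_)
          by_cases hx : x ∈ S
          · rw [Set.indicator_of_mem hx]
            linarith [norm_sub_le (f i x) c, hC i x]
          · rw [Set.indicator_of_notMem hx, add_zero, ← dist_eq_norm]
            exact not_lt.1 hx
      _ = ε + (C + ‖c‖) * (P i).real S := by
          rw [integral_add (integrable_const ε) ((integrable_const _).indicator₀ nullMeasurable),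
            integral_indicator₀ nullMeasurable, integral_const, setIntegral_const, probReal_univ,
            one_smul, smul_eq_mul, mul_comm]
  refine Metric.tendsto_nhds.2 fun ε hε => ?_
  have tail : Tendsto (fun i => ε / 2 + (C + ‖c‖) * (P i).real {x | ε / 2 < dist (f i x) c}) l
      (𝓝 (ε / 2)) := by
    simpa [Measure.real] using ((ENNReal.tendsto_toReal ENNReal.zero_ne_top).comp
      (h (ε / 2) (half_pos hε))).const_mul (C + ‖c‖) |>.const_add (ε / 2)
  filter_upwards [tail.eventually_lt_const (half_lt_self hε)] with i hi
  exact (dist_integral_le _ (half_pos hε).le i).trans_lt hi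

lemma of_sections {E : Type*} [PseudoMetricSpace E] [∀ i, IsProbabilityMeasure (P i)]
    [∀ i, IsProbabilityMeasure (Q i)] {f : ∀ i, Ω i × Ω' i → E} {c : E}
    (hf : ∀ i, StronglyMeasurable (f i))
    (h : ∀ ε > 0, TendstoInProbability P
      (fun i x => (Q i).real {y | ε < dist (f i (x, y)) c}) l 0) :
    TendstoInProbability (fun i => (P i).prod (Q i)) f l c := by
  intro ε hε
  have measurableSet (i) : MeasurableSet {p | ε < dist (f i p) c} :=
    measurableSet_lt measurable_const ((hf i).dist stronglyMeasurable_const).measurable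
  have measurable_section (i) :
      Measurable fun x => (Q i).real {y | ε < dist (f i (x, y)) c} :=
    (measurable_measure_prodMk_left (measurableSet i)).ennreal_toReal
  have norm_le_one (i x) : ‖(Q i).real {y | ε < dist (f i (x, y)) c}‖ ≤ 1 := by
    simpa only [norm_eq_abs, abs_of_nonneg measureReal_nonneg] using measureReal_le_one
  have integral_section (i) : ENNReal.ofReal (∫ x, (Q i).real {y | ε < dist (f i (x, y)) c} ∂P i) =
      (P i).prod (Q i) {p | ε < dist (f i p) c} := by
    rw [Measure.prod_apply (measurableSet i), ofReal_integral_eq_lintegral_ofReal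
      (.of_bound (measurable_section i).aestronglyMeasurable 1 (ae_of_all _ (norm_le_one i)))
      (ae_of_all _ fun _ => measureReal_nonneg)]
    exact lintegral_congr fun x => ofReal_measureReal
  have tendsto := ENNReal.tendsto_ofReal ((h ε hε).tendsto_integral
    (fun i => (measurable_section i).aestronglyMeasurable) norm_le_one)
  simpa only [integral_section, ENNReal.ofReal_zero] using tendsto

lemma sub_integral_of_variance [∀ i, IsProbabilityMeasure (P i)]
    [∀ i, IsProbabilityMeasure (Q i)] {f : ∀ i, Ω i × Ω' i → ℝ}
    (hf : ∀ i, StronglyMeasurable (f i))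
    (hf_memLp : ∀ i x, MemLp (fun y => f i (x, y)) 2 (Q i))
    (h : TendstoInProbability P (fun i x => Var[fun y => f i (x, y); Q i]) l 0) :
    TendstoInProbability (fun i => (P i).prod (Q i))
      (fun i p => f i p - ∫ y, f i (p.1, y) ∂Q i) l 0 := by
  refine of_sections
    (fun i => (hf i).sub ((hf i).integral_prod_right'.comp_measurable measurable_fst))
    fun ε hε => ?_
  have variance_div : TendstoInProbability P
      (fun i x => Var[fun y => f i (x, y); Q i] / ε ^ 2) l 0 := by
    have := h.comp_continuousAt (φ := fun v => v / ε ^ 2) (by fun_prop)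
    rwa [zero_div] at this
  refine variance_div.of_dist_le fun i x => ?_
  have variance_div_nonneg : 0 ≤ Var[fun y => f i (x, y); Q i] / ε ^ 2 :=
    div_nonneg (variance_nonneg _ _) (sq_nonneg ε)
  rw [dist_zero_right, dist_zero_right, norm_of_nonneg measureReal_nonneg,
    norm_of_nonneg variance_div_nonneg]
  refine ENNReal.toReal_le_of_le_ofReal variance_div_nonneg
    ((measure_mono fun y (hy : ε < _) => ?_).trans
      (meas_ge_le_variance_div_sq (hf_memLp i x) hε))
  exact hy.le.trans_eq (dist_zero_right _)

end TendstoInProbability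

end TendstoInProbability

section ConvergenceInDistribution

lemma tendstoInDistribution_of_tendstoInProbability_dist {ι Ω' E : Type*} {Ω : ι → Type*}
    [∀ i, MeasurableSpace (Ω i)] [MeasurableSpace Ω'] {P : ∀ i, Measure (Ω i)}
    [∀ i, IsProbabilityMeasure (P i)] {P' : Measure Ω'} [IsProbabilityMeasure P']
    [PseudoMetricSpace E] [MeasurableSpace E] [OpensMeasurableSpace E] {l : Filter ι}
    [l.IsCountablyGenerated] {X Y : ∀ i, Ω i → E} {Z : Ω' → E}
    (hX : TendstoInDistribution X l Z P P') (hY : ∀ i, AEMeasurable (Y i) (P i))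
    (hXY : TendstoInProbability P (fun i ω => dist (Y i ω) (X i ω)) l 0) :
    TendstoInDistribution Y l Z P P' := by
  refine ⟨hY, hX.aemeasurable_limit, tendsto_iff_forall_lipschitz_integral_tendsto.2 ?_⟩
  rintro F ⟨C, hC⟩ ⟨K, hK⟩
  have tendsto_X := tendsto_iff_forall_lipschitz_integral_tendsto.1 hX.tendsto F ⟨C, hC⟩ ⟨K, hK⟩
  have hF : Measurable F := hK.continuous.measurable
  have integrable_comp (i) {W : Ω i → E} (hW : AEMeasurable W (P i)) :
      Integrable (fun ω => F (W ω)) (P i) := by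
    obtain ⟨ω₀⟩ := nonempty_of_isProbabilityMeasure (P i)
    refine .of_bound (hF.comp_aemeasurable hW).aestronglyMeasurable (C + ‖F (W ω₀)‖)
      (ae_of_all _ fun ω => ?_)
    rw [← dist_zero_right (F (W ω)), ← dist_zero_right (F (W ω₀))]
    linarith [dist_triangle (F (W ω)) (F (W ω₀)) 0, hC (W ω) (W ω₀)]
  have sub_tendsto : TendstoInProbability P (fun i ω => F (Y i ω) - F (X i ω)) l 0 := by
    have lipschitz_bound := hXY.comp_continuousAt
      (show ContinuousAt (fun r : ℝ => (K : ℝ) * r) 0 by fun_prop)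
    refine lipschitz_bound.of_dist_le fun i ω => ?_
    rw [mul_zero, dist_zero_right, dist_zero_right, ← dist_eq_norm]
    exact (hK.dist_le_mul _ _).trans (le_abs_self _)
  have integral_sub_tendsto := sub_tendsto.tendsto_integral
    (fun i => ((integrable_comp i (hY i)).sub
      (integrable_comp i (hX.forall_aemeasurable i))).aestronglyMeasurable)
    fun i ω => (dist_eq_norm (F (Y i ω)) _).symm.trans_le (hC _ _)
  have integral_add (i) : ∫ ω, (F (Y i ω) - F (X i ω)) ∂P i + ∫ e, F e ∂(P i).map (X i) =
      ∫ e, F e ∂(P i).map (Y i) := by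
    rw [integral_map (hX.forall_aemeasurable i) hF.aestronglyMeasurable,
      integral_map (hY i) hF.aestronglyMeasurable,
      integral_sub (integrable_comp i (hY i)) (integrable_comp i (hX.forall_aemeasurable i)),
      sub_add_cancel]
  simpa only [ProbabilityMeasure.coe_mk, integral_add, zero_add] using
    integral_sub_tendsto.add tendsto_X

lemma tendsto_integral_of_tendstoInDistribution {ι Ω' E : Type*} {Ω : ι → Type*}
    [∀ i, MeasurableSpace (Ω i)] [MeasurableSpace Ω'] {P : ∀ i, Measure (Ω i)}
    [∀ i, IsProbabilityMeasure (P i)] {P' : Measure Ω'} [IsProbabilityMeasure P']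
    [TopologicalSpace E] [MeasurableSpace E] [OpensMeasurableSpace E] {l : Filter ι}
    {X : ∀ i, Ω i → E} {Z : Ω' → E} (hX : TendstoInDistribution X l Z P P')
    (g : BoundedContinuousFunction E ℝ) :
    Tendsto (fun i => ∫ ω, g (X i ω) ∂P i) l (𝓝 (∫ ω, g (Z ω) ∂P')) := by
  have hg : Measurable g := g.continuous.measurable
  have h := ProbabilityMeasure.tendsto_iff_forall_integral_tendsto.1 hX.tendsto g
  simpa only [ProbabilityMeasure.coe_mk,
    integral_map hX.aemeasurable_limit hg.aestronglyMeasurable,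
    integral_map (hX.forall_aemeasurable _) hg.aestronglyMeasurable] using h

open Matrix in
lemma integral_exp_dotProduct_pi_gaussianReal {ι : Type*} [Fintype ι] (a : ι → ℝ) :
    ∫ z, Complex.exp ((a ⬝ᵥ z : ℝ) * Complex.I) ∂(Measure.pi fun _ : ι => gaussianReal 0 1) =
      Complex.exp (-(∑ i, a i ^ 2 : ℝ) / 2) := by
  have h := charFun_stdGaussian (WithLp.toLp 2 a)
  rw [← map_pi_eq_stdGaussian, charFun_apply, integral_map (by fun_prop) (by fun_prop),
    ← Complex.ofReal_pow, EuclideanSpace.real_norm_sq_eq] at h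
  simpa only [EuclideanSpace.inner_eq_star_dotProduct, star_trivial] using h

open Matrix in
lemma tendstoInDistribution_dotProduct_pi_gaussianReal {ι Ω : ℕ → Type*} [∀ n, Fintype (ι n)]
    [∀ n, MeasurableSpace (Ω n)] {P : ∀ n, Measure (Ω n)} [∀ n, IsProbabilityMeasure (P n)]
    {a : ∀ n, Ω n → ι n → ℝ} (ha : ∀ n, Measurable (a n)) {v : NNReal}
    (h : TendstoInProbability P (fun n x => ∑ i, a n x i ^ 2) atTop v) :
    TendstoInDistribution (fun n p => a n p.1 ⬝ᵥ p.2) atTop id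
      (fun n => (P n).prod (Measure.pi fun _ : ι n => gaussianReal 0 1)) (gaussianReal 0 v) := by
  have measurable_dotProduct (n) : Measurable fun p : Ω n × (ι n → ℝ) => a n p.1 ⬝ᵥ p.2 := by
    have := ha n
    unfold dotProduct
    fun_prop
  refine ⟨fun n => (measurable_dotProduct n).aemeasurable, aemeasurable_id,
    ProbabilityMeasure.tendsto_iff_tendsto_charFun.2 fun t => ?_⟩
  have charFun_map (n) : charFun (((P n).prod (Measure.pi fun _ : ι n => gaussianReal 0 1)).map
      fun p => a n p.1 ⬝ᵥ p.2) t =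
      ∫ x, Complex.exp (-((∑ i, a n x i ^ 2) * t ^ 2 / 2 : ℝ)) ∂P n := by
    rw [charFun_apply_real, integral_map (measurable_dotProduct n).aemeasurable (by fun_prop),
      integral_prod]
    · refine integral_congr_ae (ae_of_all _ fun x => ?_)
      have := integral_exp_dotProduct_pi_gaussianReal (t • a n x)
      simpa [mul_pow, ← Finset.mul_sum, mul_comm, neg_div] using this
    · refine .of_bound (by have := measurable_dotProduct n; fun_prop) 1 (ae_of_all _ fun p => ?_)
      rw [← Complex.ofReal_mul, Complex.norm_exp_ofReal_mul_I]
  have norm_exp_le (u : ℝ) (hu : 0 ≤ u) : ‖Complex.exp (-(u * t ^ 2 / 2 : ℝ))‖ ≤ 1 := by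
    rw [← Complex.ofReal_neg, Complex.norm_exp_ofReal, Real.exp_le_one_iff]
    linarith [mul_nonneg hu (sq_nonneg t)]
  have integral_tendsto := (h.comp_continuousAt
    (φ := fun u : ℝ => Complex.exp (-(u * t ^ 2 / 2 : ℝ))) (by fun_prop)).tendsto_integral
    (fun n => by have := ha n; fun_prop)
    fun n x => norm_exp_le _ (Finset.sum_nonneg fun i _ => sq_nonneg (a n x i))
  simpa [charFun_map, charFun_gaussianReal] using integral_tendsto

end ConvergenceInDistribution

section GaussianMoments

lemma iteratedDeriv_exp_mul_sq_add_two (v : ℝ) (n : ℕ) (t : ℝ) :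
    iteratedDeriv (n + 2) (fun t : ℝ => rexp (v * t ^ 2 / 2)) t =
      v * (t * iteratedDeriv (n + 1) (fun t : ℝ => rexp (v * t ^ 2 / 2)) t +
        (n + 1) * iteratedDeriv n (fun t : ℝ => rexp (v * t ^ 2 / 2)) t) := by
  set M : ℝ → ℝ := fun t => rexp (v * t ^ 2 / 2)
  have hM : ContDiff ℝ (⊤ : ℕ∞) M := by fun_prop
  have hasDerivAt_iter (k : ℕ) (t : ℝ) :
      HasDerivAt (iteratedDeriv k M) (iteratedDeriv (k + 1) M t) t := by
    rw [iteratedDeriv_succ]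
    exact (hM.differentiable_iteratedDeriv k (by exact_mod_cast WithTop.coe_lt_top k) t).hasDerivAt
  have hM' : deriv M = fun t => v * (t * M t) := by
    funext t
    have h : HasDerivAt (fun t : ℝ => v * t ^ 2 / 2) (v * t) t :=
      (((hasDerivAt_pow 2 t).const_mul v).div_const 2).congr_deriv (by ring)
    rw [h.exp.deriv]
    ring
  induction n generalizing t with
  | zero =>
    have h : HasDerivAt (iteratedDeriv 1 M) (v * (1 * M t + t * iteratedDeriv 1 M t)) t := by
      rw [iteratedDeriv_one, hM']
      have := (((hasDerivAt_id' t).mul (hasDerivAt_iter 0 t)).const_mul v)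
      simpa [hM'] using this
    rw [(hasDerivAt_iter 1 t).unique h]
    simp only [zero_add, CharP.cast_eq_zero, iteratedDeriv_zero]
    ring
  | succ n ih =>
    have h := (((hasDerivAt_id' t).fun_mul (hasDerivAt_iter (n + 1) t)).fun_add
      ((hasDerivAt_iter n t).const_mul ((n : ℝ) + 1))).const_mul v
    rw [← funext ih] at h
    rw [(hasDerivAt_iter (n + 2) t).unique h]
    push_cast
    ring

lemma integral_pow_add_two_gaussianReal (v : NNReal) (n : ℕ) :
    ∫ u, u ^ (n + 2) ∂(gaussianReal 0 v) = v * (n + 1) * ∫ u, u ^ n ∂(gaussianReal 0 v) := by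
  have moment (k : ℕ) : ∫ u, u ^ k ∂(gaussianReal 0 v) =
      iteratedDeriv k (fun t : ℝ => rexp (v * t ^ 2 / 2)) 0 := by
    have h := iteratedDeriv_mgf_zero (X := id) (μ := gaussianReal 0 v) (by simp) k
    simpa [mgf_id_gaussianReal] using h.symm
  rw [moment, moment, iteratedDeriv_exp_mul_sq_add_two]
  ring

lemma memLp_sq_gaussianReal (μ : ℝ) (v : NNReal) :
    MemLp (fun u : ℝ => u ^ 2) 2 (gaussianReal μ v) := by
  rw [memLp_two_iff_integrable_sq (by fun_prop)]
  have h : MemLp (id : ℝ → ℝ) (4 : ℕ) (gaussianReal μ v) := memLp_id_gaussianReal 4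
  refine (h.integrable_norm_pow four_ne_zero).congr (ae_of_all _ fun u => ?_)
  simp only [id, norm_eq_abs, ← pow_mul]
  exact (show Even 4 by decide).pow_abs u

lemma integral_sq_gaussianReal (v : NNReal) : ∫ u, u ^ 2 ∂(gaussianReal 0 v) = v := by
  simpa using integral_pow_add_two_gaussianReal v 0

lemma variance_sq_gaussianReal (v : NNReal) :
    Var[fun u => u ^ 2; gaussianReal 0 v] = 2 * (v : ℝ) ^ 2 := by
  have fourth : ∫ u, u ^ 4 ∂(gaussianReal 0 v) = 3 * (v : ℝ) ^ 2 := by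
    rw [integral_pow_add_two_gaussianReal v 2, integral_sq_gaussianReal]
    push_cast
    ring
  rw [variance_eq_sub (memLp_sq_gaussianReal 0 v), integral_sq_gaussianReal]
  simp only [Pi.pow_apply, ← pow_mul]
  norm_num [fourth]
  ring

end GaussianMoments

section QuadraticForm

open Matrix

variable {ι : Type*} [Fintype ι]

lemma measurePreserving_mulVec_pi_gaussianReal [DecidableEq ι] (U : orthogonalGroup ι ℝ) :
    MeasurePreserving (fun z => (U : Matrix ι ι ℝ) *ᵥ z)
      (Measure.pi fun _ : ι => gaussianReal 0 1) (Measure.pi fun _ : ι => gaussianReal 0 1) := by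
  have toLp : MeasurePreserving (WithLp.toLp 2) (Measure.pi fun _ : ι => gaussianReal 0 1)
      (ProbabilityTheory.stdGaussian (EuclideanSpace ℝ ι)) :=
    ⟨by fun_prop, map_pi_eq_stdGaussian⟩
  have ofLp := toLp.symm (MeasurableEquiv.toLp 2 (ι → ℝ))
  let T := toEuclideanCLM (𝕜 := ℝ) (U : Matrix ι ι ℝ)
  have hT : T ∈ unitary (EuclideanSpace ℝ ι →L[ℝ] EuclideanSpace ℝ ι) :=
    Unitary.map_mem toEuclideanCLM U.2
  have isometry : MeasurePreserving T (ProbabilityTheory.stdGaussian (EuclideanSpace ℝ ι))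
      (ProbabilityTheory.stdGaussian _) :=
    ⟨by fun_prop, stdGaussian_map (Unitary.linearIsometryEquiv ⟨T, hT⟩)⟩
  exact ofLp.comp (isometry.comp toLp)

variable {A : Matrix ι ι ℝ}

lemma eigenvectorUnitary_mulVec_dotProduct_mulVec [DecidableEq ι] (hA : A.IsHermitian)
    (w : ι → ℝ) :
    ((hA.eigenvectorUnitary : Matrix ι ι ℝ) *ᵥ w) ⬝ᵥ
      A *ᵥ ((hA.eigenvectorUnitary : Matrix ι ι ℝ) *ᵥ w) =
      ∑ i, hA.eigenvalues i * w i ^ 2 := by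
  have diagonalized : (hA.eigenvectorUnitary : Matrix ι ι ℝ)ᵀ * (A * hA.eigenvectorUnitary) =
      diagonal hA.eigenvalues := by
    have h := hA.conjStarAlgAut_star_eigenvectorUnitary
    rw [Unitary.conjStarAlgAut_star_apply, mul_assoc] at h
    exact h
  rw [mulVec_mulVec, dotProduct_comm, ← dotProduct_transpose_mulVec, mulVec_mulVec,
    diagonalized, dotProduct]
  refine Finset.sum_congr rfl fun i _ => ?_
  rw [mulVec_diagonal]
  ring

lemma trace_mul_self_eq_sum_eigenvalues_sq [DecidableEq ι] (hA : A.IsHermitian) :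
    (A * A).trace = ∑ i, hA.eigenvalues i ^ 2 := by
  have h : A * A = Unitary.conjStarAlgAut ℝ (Matrix ι ι ℝ) hA.eigenvectorUnitary
      (diagonal (hA.eigenvalues ^ 2)) := by
    conv_lhs => rw [hA.spectral_theorem, ← map_mul, diagonal_mul_diagonal]
    congr 2
    ext i
    simp [sq]
  rw [h, Unitary.conjStarAlgAut_apply, trace_mul_cycle, Unitary.coe_star_mul_self, one_mul,
    trace_diagonal]
  simp only [Pi.pow_apply]

lemma memLp_sq_eval_pi_gaussianReal (i : ι) :
    MemLp (fun z : ι → ℝ => z i ^ 2) 2 (Measure.pi fun _ : ι => gaussianReal 0 1) :=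
  (memLp_sq_gaussianReal 0 1).comp_measurePreserving
    (measurePreserving_eval (fun _ : ι => gaussianReal 0 1) i)

lemma memLp_sum_mul_sq_pi_gaussianReal (c : ι → ℝ) :
    MemLp (fun z => ∑ i, c i * z i ^ 2) 2 (Measure.pi fun _ : ι => gaussianReal 0 1) :=
  memLp_finsetSum _ fun i _ => (memLp_sq_eval_pi_gaussianReal i).const_mul (c i)

lemma integral_sum_mul_sq_pi_gaussianReal (c : ι → ℝ) :
    ∫ z, ∑ i, c i * z i ^ 2 ∂(Measure.pi fun _ : ι => gaussianReal 0 1) = ∑ i, c i := by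
  rw [integral_finsetSum _ fun i _ =>
    ((memLp_sq_eval_pi_gaussianReal i).integrable one_le_two).const_mul (c i)]
  refine Finset.sum_congr rfl fun i _ => ?_
  rw [integral_const_mul, integral_comp_eval (μ := fun _ : ι => gaussianReal 0 1)
    (f := fun u : ℝ => u ^ 2) (by fun_prop), integral_sq_gaussianReal, NNReal.coe_one, mul_one]

lemma variance_sum_mul_sq_pi_gaussianReal (c : ι → ℝ) :
    Var[fun z => ∑ i, c i * z i ^ 2; Measure.pi fun _ : ι => gaussianReal 0 1] =
      2 * ∑ i, c i ^ 2 := by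
  have h := variance_sum_pi (μ := fun _ : ι => gaussianReal 0 1)
    (X := fun i u => c i * u ^ 2) fun i => (memLp_sq_gaussianReal 0 1).const_mul (c i)
  simp only [Finset.sum_fn, variance_const_mul, variance_sq_gaussianReal] at h
  rw [h, Finset.mul_sum]
  refine Finset.sum_congr rfl fun i _ => ?_
  rw [NNReal.coe_one]
  ring

lemma memLp_dotProduct_mulVec_pi_gaussianReal (hA : A.IsHermitian) :
    MemLp (fun z => z ⬝ᵥ A *ᵥ z) 2 (Measure.pi fun _ : ι => gaussianReal 0 1) := by
  classical
  rw [← (measurePreserving_mulVec_pi_gaussianReal hA.eigenvectorUnitary).map_eq,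
    memLp_map_measure_iff (by fun_prop) (by fun_prop)]
  simpa only [Function.comp_def, eigenvectorUnitary_mulVec_dotProduct_mulVec] using
    memLp_sum_mul_sq_pi_gaussianReal hA.eigenvalues

lemma integral_dotProduct_mulVec_pi_gaussianReal (hA : A.IsHermitian) :
    ∫ z, z ⬝ᵥ A *ᵥ z ∂(Measure.pi fun _ : ι => gaussianReal 0 1) = A.trace := by
  classical
  rw [← (measurePreserving_mulVec_pi_gaussianReal hA.eigenvectorUnitary).map_eq,
    integral_map (by fun_prop) (by fun_prop)]
  simp only [eigenvectorUnitary_mulVec_dotProduct_mulVec, integral_sum_mul_sq_pi_gaussianReal,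
    hA.trace_eq_sum_eigenvalues, RCLike.ofReal_real_eq_id, id]

lemma variance_dotProduct_mulVec_pi_gaussianReal (hA : A.IsHermitian) :
    Var[fun z => z ⬝ᵥ A *ᵥ z; Measure.pi fun _ : ι => gaussianReal 0 1] = 2 * (A * A).trace := by
  classical
  rw [← (measurePreserving_mulVec_pi_gaussianReal hA.eigenvectorUnitary).variance_fun_comp
    (by fun_prop), trace_mul_self_eq_sum_eigenvalues_sq hA]
  simp only [eigenvectorUnitary_mulVec_dotProduct_mulVec, variance_sum_mul_sq_pi_gaussianReal]

end QuadraticForm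

section SecondOrderExpansion

lemma exists_sub_eq_fderiv_add_fderiv_fderiv_div_two {E : Type*} [NormedAddCommGroup E]
    [NormedSpace ℝ E] {f : E → ℝ} (hf : ContDiff ℝ 2 f) (x v : E) :
    ∃ t ∈ Set.Ioo (0 : ℝ) 1, f (x + v) - f x =
      fderiv ℝ f x v + fderiv ℝ (fderiv ℝ f) (x + t • v) v v / 2 := by
  have hasDerivAt_line (t : ℝ) : HasDerivAt (fun u : ℝ => x + u • v) v t := by
    simpa using ((hasDerivAt_id t).smul_const v).const_add x
  have hasDerivAt_comp_line (t : ℝ) :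
      HasDerivAt (fun u : ℝ => f (x + u • v)) (fderiv ℝ f (x + t • v) v) t :=
    (hf.differentiable two_ne_zero _).hasFDerivAt.comp_hasDerivAt t (hasDerivAt_line t)
  have hasDerivAt_fderiv_line (t : ℝ) : HasDerivAt (fun u : ℝ => fderiv ℝ f (x + u • v) v)
      (fderiv ℝ (fderiv ℝ f) (x + t • v) v v) t := by
    have differentiable_fderiv : Differentiable ℝ (fderiv ℝ f) :=
      (hf.fderiv_right (m := 1) (by norm_num)).differentiable one_ne_zero
    simpa using ((differentiable_fderiv _).hasFDerivAt.comp_hasDerivAt t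
      (hasDerivAt_line t)).clm_apply (hasDerivAt_const t v)
  have deriv_line : deriv (fun u : ℝ => f (x + u • v)) = fun u => fderiv ℝ f (x + u • v) v :=
    funext fun t => (hasDerivAt_comp_line t).deriv
  obtain ⟨t, ht, taylor⟩ := taylor_mean_remainder_lagrange_iteratedDeriv (n := 1)
    (f := fun u : ℝ => f (x + u • v)) zero_ne_one
    (ContDiff.contDiffOn (by norm_num; fun_prop))
  refine ⟨t, by simpa using ht, ?_⟩
  have derivWithin_line : derivWithin (fun u : ℝ => f (x + u • v)) (Set.uIcc 0 1) 0 =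
      fderiv ℝ f x v := by
    rw [(hasDerivAt_comp_line 0).hasDerivWithinAt.derivWithin
      (uniqueDiffOn_uIcc zero_ne_one _ Set.left_mem_uIcc), zero_smul, add_zero]
  rw [taylorWithinEval_succ, taylor_within_zero_eval, iteratedDerivWithin_one, derivWithin_line,
    iteratedDeriv_succ, iteratedDeriv_one, deriv_line, (hasDerivAt_fderiv_line t).deriv] at taylor
  norm_num at taylor
  linear_combination taylor

lemma le_biSup_of_bddAbove {α : Type*} {s : Set α} {f : α → ℝ} (hf : BddAbove (f '' s))
    {a : α} (ha : a ∈ s) (ha_nonneg : 0 ≤ f a) : f a ≤ ⨆ b ∈ s, f b := by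
  obtain ⟨M, hM⟩ := hf
  have bddAbove_range : BddAbove (Set.range fun b => ⨆ _ : b ∈ s, f b) := by
    refine ⟨M, Set.forall_mem_range.2 fun b => Real.iSup_le (fun hb => hM ⟨b, hb, rfl⟩) ?_⟩
    exact ha_nonneg.trans (hM ⟨a, ha, rfl⟩)
  refine le_ciSup_of_le bddAbove_range a ?_
  rw [ciSup_pos ha]

open Matrix

variable {d : ℕ} {L : (Fin d → ℝ) → ℝ}

/-- The gradient `∇L(x)`, as a vector of partial derivatives. Mathlib's `gradient` needs an inner
product space, while `Fin d → ℝ` carries the sup norm. -/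
noncomputable def grad (L : (Fin d → ℝ) → ℝ) (x : Fin d → ℝ) : Fin d → ℝ :=
  fun i => fderiv ℝ L x (Pi.single i 1)

lemma fderiv_apply_eq_grad_dotProduct (L : (Fin d → ℝ) → ℝ) (x v : Fin d → ℝ) :
    fderiv ℝ L x v = grad L x ⬝ᵥ v := by
  conv_lhs => rw [pi_eq_sum_univ' v, map_sum]
  exact Finset.sum_congr rfl fun i _ => by rw [map_smul, smul_eq_mul, mul_comm, grad]

lemma hessian_apply (hL : ContDiff ℝ 2 L) (x : Fin d → ℝ) (i j : Fin d) :
    hessian L x i j = fderiv ℝ (fderiv ℝ L) x (Pi.single i 1) (Pi.single j 1) := by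
  have differentiableAt_fderiv : DifferentiableAt ℝ (fderiv ℝ L) x :=
    (hL.fderiv_right (m := 1) (by norm_num)).differentiable one_ne_zero x
  simp [hessian, fderiv_clm_apply differentiableAt_fderiv (differentiableAt_const _)]

lemma fderiv_fderiv_apply_apply (hL : ContDiff ℝ 2 L) (x v w : Fin d → ℝ) :
    fderiv ℝ (fderiv ℝ L) x v w = v ⬝ᵥ hessian L x *ᵥ w := by
  have toMatrix_eq :
      LinearMap.toMatrix₂' ℝ (fderiv ℝ (fderiv ℝ L) x).toLinearMap₁₂ = hessian L x := by
    ext i j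
    simp [hessian_apply hL]
  rw [← toMatrix_eq, ← toLinearMap₂'_apply', Matrix.toLinearMap₂'_toMatrix']
  rfl

lemma isHermitian_hessian (hL : ContDiff ℝ 2 L) (x : Fin d → ℝ) : (hessian L x).IsHermitian := by
  ext i j
  simpa only [conjTranspose_apply, star_trivial, hessian_apply hL] using
    hL.contDiffAt.isSymmSndFDerivAt (by simp) _ _

lemma continuous_grad (hL : ContDiff ℝ 2 L) : Continuous (grad L) :=
  continuous_pi fun _ => (hL.continuous_fderiv two_ne_zero).clm_apply continuous_const

lemma continuous_hessian (hL : ContDiff ℝ 2 L) : Continuous (hessian L) := by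
  have continuous_fderiv_fderiv : Continuous (fderiv ℝ (fderiv ℝ L)) :=
    (hL.fderiv_right (m := 1) (by norm_num)).continuous_fderiv one_ne_zero
  refine continuous_pi fun i => continuous_pi fun j => ?_
  simp only [hessian_apply hL]
  exact (continuous_fderiv_fderiv.clm_apply continuous_const).clm_apply continuous_const

lemma abs_sub_sub_quadratic_le_mul_iSup (hL : ContDiff ℝ 2 L) (x z : Fin d → ℝ) (s ℓ : ℝ) :
    |L (x + (ℓ / s) • z) - L x - ((ℓ / s) • grad L x) ⬝ᵥ z -
      ℓ ^ 2 / 2 * (z ⬝ᵥ hessian L x *ᵥ z / s ^ 2)| ≤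
      ℓ ^ 2 / 2 * ⨆ t ∈ Set.Ioo (0 : ℝ) 1,
        |z ⬝ᵥ (hessian L (x + (t * ℓ / s) • z) - hessian L x) *ᵥ z / s ^ 2| := by
  set variation : ℝ → ℝ := fun t =>
    |z ⬝ᵥ (hessian L (x + (t * ℓ / s) • z) - hessian L x) *ᵥ z / s ^ 2|
  have continuous_variation : Continuous variation := by
    have := continuous_hessian hL
    fun_prop
  have bddAbove_variation : BddAbove (variation '' Set.Ioo 0 1) :=
    (isCompact_Icc.bddAbove_image continuous_variation.continuousOn).mono
      (Set.image_mono Set.Ioo_subset_Icc_self)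
  obtain ⟨t, ht, taylor⟩ := exists_sub_eq_fderiv_add_fderiv_fderiv_div_two hL x ((ℓ / s) • z)
  have remainder_eq : L (x + (ℓ / s) • z) - L x - ((ℓ / s) • grad L x) ⬝ᵥ z -
      ℓ ^ 2 / 2 * (z ⬝ᵥ hessian L x *ᵥ z / s ^ 2) =
      ℓ ^ 2 / 2 * (z ⬝ᵥ (hessian L (x + (t * ℓ / s) • z) - hessian L x) *ᵥ z / s ^ 2) := by
    rw [taylor, fderiv_apply_eq_grad_dotProduct, fderiv_fderiv_apply_apply hL, smul_smul,
      ← mul_div_assoc, sub_mulVec, dotProduct_sub]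
    simp only [mulVec_smul, dotProduct_smul, smul_dotProduct, smul_eq_mul]
    ring
  rw [remainder_eq, abs_mul, abs_of_nonneg (by positivity)]
  gcongr
  exact le_biSup_of_bddAbove bddAbove_variation ht (abs_nonneg _)

end SecondOrderExpansion

section Increment

open Matrix

variable {L : (d : ℕ) → (Fin d → ℝ) → ℝ} {μX : (d : ℕ) → Measure (Fin d → ℝ)}
  [∀ d, IsProbabilityMeasure (μX d)] {s : ℕ → ℝ} {ℓ : ℝ}

instance (d : ℕ) : IsProbabilityMeasure (_root_.stdGaussian d) :=
  inferInstanceAs (IsProbabilityMeasure (Measure.pi _))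

lemma tendstoInDistribution_smul_grad_dotProduct {v : NNReal} (hv : v = ℓ ^ 2)
    (hL : ∀ d, ContDiff ℝ 2 (L d))
    (hgrad : TendstoInProbability μX (fun d x => √(gradNormSq (L d) x) / s d) atTop 1) :
    TendstoInDistribution (fun d p => ((ℓ / s d) • grad (L d) p.1) ⬝ᵥ p.2) atTop id
      (fun d => (μX d).prod (_root_.stdGaussian d)) (gaussianReal 0 v) := by
  refine tendstoInDistribution_dotProduct_pi_gaussianReal
    (a := fun d x => (ℓ / s d) • grad (L d) x)
    (fun d => (continuous_grad (hL d)).measurable.fun_const_smul _) ?_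
  have sum_sq_eq (d) (x : Fin d → ℝ) : ∑ i, ((ℓ / s d) • grad (L d) x) i ^ 2 =
      ℓ ^ 2 * (√(gradNormSq (L d) x) / s d) ^ 2 := by
    have gradNormSq_nonneg : 0 ≤ gradNormSq (L d) x := Finset.sum_nonneg fun _ _ => sq_nonneg _
    rw [div_pow, sq_sqrt gradNormSq_nonneg]
    simp only [Pi.smul_apply, smul_eq_mul, mul_pow, ← Finset.mul_sum]
    rw [gradNormSq, div_pow]
    simp only [grad]
    ring
  have := hgrad.comp_continuousAt (φ := fun r => ℓ ^ 2 * r ^ 2) (by fun_prop)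
  rw [one_pow, mul_one] at this
  simpa only [sum_sq_eq, hv] using this

lemma tendstoInProbability_dotProduct_hessian_mulVec_sub_trace (hL : ∀ d, ContDiff ℝ 2 (L d))
    (htrace : TendstoInProbability μX
      (fun d x => (hessian (L d) x * hessian (L d) x).trace / s d ^ 4) atTop 0) :
    TendstoInProbability (fun d => (μX d).prod (_root_.stdGaussian d))
      (fun d p => p.2 ⬝ᵥ hessian (L d) p.1 *ᵥ p.2 / s d ^ 2 -
        (hessian (L d) p.1).trace / s d ^ 2) atTop 0 := by
  have variance_eq (d) (x : Fin d → ℝ) :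
      Var[fun z => z ⬝ᵥ hessian (L d) x *ᵥ z / s d ^ 2; _root_.stdGaussian d] =
        2 * ((hessian (L d) x * hessian (L d) x).trace / s d ^ 4) := by
    simp only [div_eq_inv_mul, _root_.stdGaussian, variance_const_mul,
      variance_dotProduct_mulVec_pi_gaussianReal (isHermitian_hessian (hL d) x)]
    ring
  have integral_eq (d) (x : Fin d → ℝ) :
      ∫ z, z ⬝ᵥ hessian (L d) x *ᵥ z / s d ^ 2 ∂(_root_.stdGaussian d) =
        (hessian (L d) x).trace / s d ^ 2 := by
    rw [integral_div, _root_.stdGaussian,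
      integral_dotProduct_mulVec_pi_gaussianReal (isHermitian_hessian (hL d) x)]
  have variance_tendsto : TendstoInProbability μX (fun d x =>
      Var[fun z => z ⬝ᵥ hessian (L d) x *ᵥ z / s d ^ 2; _root_.stdGaussian d]) atTop 0 := by
    have := htrace.comp_continuousAt (φ := fun r => 2 * r) (by fun_prop)
    rw [mul_zero] at this
    simpa only [variance_eq] using this
  have continuous_form (d) : Continuous fun p : (Fin d → ℝ) × (Fin d → ℝ) =>
      p.2 ⬝ᵥ hessian (L d) p.1 *ᵥ p.2 / s d ^ 2 := by
    have := continuous_hessian (hL d)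
    fun_prop
  have centered := TendstoInProbability.sub_integral_of_variance
    (fun d => (continuous_form d).stronglyMeasurable) (fun d x => by
      simpa only [div_eq_inv_mul, _root_.stdGaussian] using
        (memLp_dotProduct_mulVec_pi_gaussianReal (isHermitian_hessian (hL d) x)).const_mul
          (s d ^ 2)⁻¹) variance_tendsto
  simpa only [integral_eq] using centered

lemma tendstoInProbability_increment_sub_smul_grad_dotProduct (hL : ∀ d, ContDiff ℝ 2 (L d))
    (hlap : TendstoInProbability μX (fun d x => (hessian (L d) x).trace / s d ^ 2) atTop (-1))
    (htrace : TendstoInProbability μX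
      (fun d x => (hessian (L d) x * hessian (L d) x).trace / s d ^ 4) atTop 0)
    (hhess : TendstoInProbability (fun d => (μX d).prod (_root_.stdGaussian d))
      (fun d p => ⨆ t ∈ Set.Ioo (0 : ℝ) 1, |p.2 ⬝ᵥ (hessian (L d) (p.1 + (t * ℓ / s d) • p.2) -
        hessian (L d) p.1) *ᵥ p.2 / s d ^ 2|) atTop 0) :
    TendstoInProbability (fun d => (μX d).prod (_root_.stdGaussian d))
      (fun d p => L d (p.1 + (ℓ / s d) • p.2) - L d p.1 - ((ℓ / s d) • grad (L d) p.1) ⬝ᵥ p.2)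
      atTop (-ℓ ^ 2 / 2) := by
  have quadratic_sub_trace := tendstoInProbability_dotProduct_hessian_mulVec_sub_trace hL htrace
  have taylor_error : TendstoInProbability (fun d => (μX d).prod (_root_.stdGaussian d))
      (fun d p => L d (p.1 + (ℓ / s d) • p.2) - L d p.1 - ((ℓ / s d) • grad (L d) p.1) ⬝ᵥ p.2 -
        ℓ ^ 2 / 2 * (p.2 ⬝ᵥ hessian (L d) p.1 *ᵥ p.2 / s d ^ 2)) atTop 0 := by
    have scaled := hhess.comp_continuousAt (φ := fun r => ℓ ^ 2 / 2 * r) (by fun_prop)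
    refine scaled.of_dist_le fun d p => ?_
    rw [mul_zero, dist_zero_right, dist_zero_right]
    exact (abs_sub_sub_quadratic_le_mul_iSup (hL d) p.1 p.2 (s d) ℓ).trans (le_abs_self _)
  have combined := (taylor_error.prodMk (quadratic_sub_trace.prodMk
    (hlap.comp_fst (Q := fun d => _root_.stdGaussian d)))).comp_continuousAt
      (φ := fun r => r.1 + ℓ ^ 2 / 2 * (r.2.1 + r.2.2)) (by fun_prop)
  have limit_eq : 0 + ℓ ^ 2 / 2 * (0 + -1) = -ℓ ^ 2 / 2 := by ring
  simpa only [sub_add_cancel, limit_eq] using combined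

lemma tendstoInDistribution_increment {v : NNReal} (hv : v = ℓ ^ 2)
    (hL : ∀ d, ContDiff ℝ 2 (L d))
    (hgrad : TendstoInProbability μX (fun d x => √(gradNormSq (L d) x) / s d) atTop 1)
    (hlap : TendstoInProbability μX (fun d x => (hessian (L d) x).trace / s d ^ 2) atTop (-1))
    (htrace : TendstoInProbability μX
      (fun d x => (hessian (L d) x * hessian (L d) x).trace / s d ^ 4) atTop 0)
    (hhess : TendstoInProbability (fun d => (μX d).prod (_root_.stdGaussian d))
      (fun d p => ⨆ t ∈ Set.Ioo (0 : ℝ) 1, |p.2 ⬝ᵥ (hessian (L d) (p.1 + (t * ℓ / s d) • p.2) -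
        hessian (L d) p.1) *ᵥ p.2 / s d ^ 2|) atTop 0) :
    TendstoInDistribution (fun d p => L d (p.1 + (ℓ / s d) • p.2) - L d p.1) atTop
      (· + -ℓ ^ 2 / 2) (fun d => (μX d).prod (_root_.stdGaussian d))
      (gaussianReal 0 v) := by
  have shifted_linear := (tendstoInDistribution_smul_grad_dotProduct hv hL hgrad).continuous_comp
    (continuous_add_const (-ℓ ^ 2 / 2))
  have aemeasurable_increment (d) : AEMeasurable (fun p : (Fin d → ℝ) × (Fin d → ℝ) =>
      L d (p.1 + (ℓ / s d) • p.2) - L d p.1) ((μX d).prod (_root_.stdGaussian d)) := by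
    have := (hL d).continuous
    exact Continuous.aemeasurable (by fun_prop)
  refine tendstoInDistribution_of_tendstoInProbability_dist shifted_linear aemeasurable_increment ?_
  have remainder := tendstoInProbability_increment_sub_smul_grad_dotProduct hL hlap htrace hhess
  refine remainder.of_dist_le fun d p => ?_
  rw [dist_zero_right, norm_of_nonneg dist_nonneg, Real.dist_eq, Real.dist_eq]
  exact le_of_eq (congrArg abs (sub_add_eq_sub_sub _ _ _))

theorem stmt5_general (L : (d : ℕ) → (Fin d → ℝ) → ℝ) (hL : ∀ d, ContDiff ℝ 2 (L d))
    (μX : (d : ℕ) → Measure (Fin d → ℝ)) [∀ d, IsProbabilityMeasure (μX d)] (s : ℕ → ℝ) (ℓ : ℝ)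
    (hgrad : ∀ ε > (0 : ℝ), Tendsto (fun d =>
      μX d {x | ε < |√(gradNormSq (L d) x) / s d - 1|}) atTop (𝓝 0))
    (hlap : ∀ ε > (0 : ℝ), Tendsto (fun d =>
      μX d {x | ε < |(hessian (L d) x).trace / s d ^ 2 + 1|}) atTop (𝓝 0))
    (htrace : ∀ ε > (0 : ℝ), Tendsto (fun d =>
      μX d {x | ε < |(hessian (L d) x * hessian (L d) x).trace / s d ^ 4|}) atTop (𝓝 0))
    (hhess : ∀ ε > (0 : ℝ), Tendsto (fun d =>
      ((μX d).prod (_root_.stdGaussian d)) {p | ε < ⨆ t ∈ Set.Ioo (0 : ℝ) 1,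
        |(∑ i, ∑ j, p.2 i *
            (hessian (L d) (p.1 + (t * ℓ / s d) • p.2) - hessian (L d) p.1) i j * p.2 j)
          / s d ^ 2|}) atTop (𝓝 0))
    (g : BoundedContinuousFunction ℝ ℝ) :
    Tendsto (fun d => ∫ p, g (L d (p.1 + (ℓ / s d) • p.2) - L d p.1)
      ∂((μX d).prod (_root_.stdGaussian d))) atTop
      (𝓝 (∫ v, g v ∂(gaussianReal (-ℓ ^ 2 / 2) ⟨ℓ ^ 2, sq_nonneg ℓ⟩))) := by
  have trace_tendsto : TendstoInProbability μX
      (fun d x => (hessian (L d) x).trace / s d ^ 2) atTop (-1) := by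
    simpa only [TendstoInProbability, Real.dist_eq, sub_neg_eq_add] using hlap
  have trace_sq_tendsto : TendstoInProbability μX
      (fun d x => (hessian (L d) x * hessian (L d) x).trace / s d ^ 4) atTop 0 := by
    simpa only [TendstoInProbability, Real.dist_eq, sub_zero] using htrace
  have variation_tendsto : TendstoInProbability (fun d => (μX d).prod (_root_.stdGaussian d))
      (fun d p => ⨆ t ∈ Set.Ioo (0 : ℝ) 1, |p.2 ⬝ᵥ (hessian (L d) (p.1 + (t * ℓ / s d) • p.2) -
        hessian (L d) p.1) *ᵥ p.2 / s d ^ 2|) atTop 0 := by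
    have abs_iSup (d) (p : (Fin d → ℝ) × (Fin d → ℝ)) := abs_of_nonneg (Real.iSup_nonneg fun t =>
      Real.iSup_nonneg fun _ : t ∈ Set.Ioo (0 : ℝ) 1 => abs_nonneg
        (p.2 ⬝ᵥ (hessian (L d) (p.1 + (t * ℓ / s d) • p.2) - hessian (L d) p.1) *ᵥ p.2 / s d ^ 2))
    simpa only [TendstoInProbability, Real.dist_eq, sub_zero, abs_iSup, ← Matrix.toBilin'_apply,
      Matrix.toBilin'_apply'] using hhess
  -- The anonymous constructor is elaborated as a subtype, which blocks instance search on
  -- `gaussianReal`.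
  obtain ⟨v, hv⟩ : ∃ v : NNReal, v = ⟨ℓ ^ 2, sq_nonneg ℓ⟩ := ⟨_, rfl⟩
  rw [← hv]
  have increment_tendsto := tendsto_integral_of_tendstoInDistribution
    (tendstoInDistribution_increment (congrArg NNReal.toReal hv) hL hgrad trace_tendsto
      trace_sq_tendsto variation_tendsto) g
  rwa [← integral_map (by fun_prop) (by fun_prop), gaussianReal_map_add_const,
    zero_add] at increment_tendsto

end Increment

/-- Gaussian limit of the log-target increment.  Under conditions
(i)–(iv) on the targets `π^(d)` with scalings `s^(d)` and `λ^(d) = ℓ/s^(d)`,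
`L^(d)(X^(d) + λ^(d) Z^(d)) − L^(d)(X^(d))` converges in distribution to
`N(−ℓ²/2, ℓ²)` (stated via convergence of integrals of bounded continuous
test functions). -/
theorem stmt5
    (pden : (d : ℕ) → (Fin d → ℝ) → ℝ) (hπ_pos : ∀ d x, 0 < pden d x)
    (L : (d : ℕ) → (Fin d → ℝ) → ℝ)
    (hL : ∀ d, L d = fun x => Real.log (pden d x))
    (hL_smooth : ∀ d, ContDiff ℝ 2 (L d))
    (μX : (d : ℕ) → Measure (Fin d → ℝ))
    (hμX : ∀ d, μX d = volume.withDensity fun x => ENNReal.ofReal (pden d x))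
    (hμX_prob : ∀ d, IsProbabilityMeasure (μX d))
    (s : ℕ → ℝ) (hs_pos : ∀ d, 0 < s d)
    -- (i) ‖∇L^(d)(X)‖ / s^(d) → 1 in probability
    (hgrad : ∀ ε > (0 : ℝ), Tendsto (fun d =>
      μX d {x | ε < |Real.sqrt (gradNormSq (L d) x) / s d - 1|}) atTop (𝓝 0))
    -- (ii) ΔL^(d)(X) / (s^(d))² → −1 in probability
    (hlap : ∀ ε > (0 : ℝ), Tendsto (fun d =>
      μX d {x | ε < |Matrix.trace (hessian (L d) x) / (s d) ^ 2 + 1|}) atTop (𝓝 0))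
    -- (iii) Trace[(H^(d)(X))²] / (s^(d))⁴ → 0 in probability
    (htrace : ∀ ε > (0 : ℝ), Tendsto (fun d =>
      μX d {x | ε < |Matrix.trace (hessian (L d) x * hessian (L d) x) / (s d) ^ 4|})
      atTop (𝓝 0))
    -- (iv) regularity of the Hessian
    (hhess_reg : ∀ σ > (0 : ℝ), ∀ ε > (0 : ℝ), Tendsto (fun d =>
      ((μX d).prod (stdGaussian d)) {p | ε < ⨆ t ∈ Set.Ioo (0 : ℝ) 1,
        |(∑ i, ∑ j, p.2 i *
            ((hessian (L d) (p.1 + (t * σ / s d) • p.2) - hessian (L d) p.1) i j) * p.2 j)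
          / (s d) ^ 2|}) atTop (𝓝 0))
    (ℓ : ℝ) (hℓ : 0 < ℓ) (lam : ℕ → ℝ) (hlam : ∀ d, lam d = ℓ / s d) :
    ∀ g : BoundedContinuousFunction ℝ ℝ,
      Tendsto (fun d => ∫ p : (Fin d → ℝ) × (Fin d → ℝ),
          g (L d (p.1 + lam d • p.2) - L d p.1) ∂((μX d).prod (stdGaussian d)))
        atTop (𝓝 (∫ v, g v ∂(gaussianReal (-ℓ ^ 2 / 2) ⟨ℓ ^ 2, sq_nonneg ℓ⟩))) := by
  simp only [hlam]
  exact stmt5_general L hL_smooth μX s ℓ hgrad hlap htrace (hhess_reg ℓ hℓ)
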